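/- Let G = ⟨x, y | x y² x⁻¹ = y³⟩. Let W be any subset of the free group F(a,b) on two generators such that every w ∈ W becomes trivial in G when evaluated at a = y⁴ and b = x y⁴ x⁻¹. Let Ḡ = ⟨ x, z | w(z, x z x⁻¹) = 1 for all w ∈ W ⟩ and let L be the kernel of the epimorphism Ḡ → G induced by x ↦ x, z ↦ y⁴. Then L is not perfect; that is, the abelianization L/[L,L] is nonzero. -/

import Mathlib

/-- The single relator `x y² x⁻¹ y⁻³` in the free group on two generators. -/
def bsRels : Set (FreeGroup (Fin 2)) :=
  {FreeGroup.of 0 * FreeGroup.of 1 ^ 2 * (FreeGroup.of 0)⁻¹ * (FreeGroup.of 1 ^ 3)⁻¹}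

/-- The Baumslag–Solitar group `G = ⟨x, y | x y² x⁻¹ = y³⟩`. -/
abbrev BSGroup := PresentedGroup bsRels

/-- `x ∈ G`. -/
def bsX : BSGroup := PresentedGroup.of 0

/-- `y ∈ G`. -/
def bsY : BSGroup := PresentedGroup.of 1

/-- Substitution `F(a,b) → F(x,z)`, `a ↦ z`, `b ↦ x z x⁻¹`, sending a word
`w = w(a,b)` to `w(z, x z x⁻¹)` (generator `0` of the target plays the role of
`x`, generator `1` the role of `z`). -/
def substitution : FreeGroup (Fin 2) →* FreeGroup (Fin 2) :=
  FreeGroup.lift (fun i => if i = 0 then FreeGroup.of 1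
    else FreeGroup.of 0 * FreeGroup.of 1 * (FreeGroup.of 0)⁻¹)

/-- Evaluation `F(a,b) → G` at `a = y⁴`, `b = x y⁴ x⁻¹`. -/
def evalInG : FreeGroup (Fin 2) →* BSGroup :=
  FreeGroup.lift (fun i => if i = 0 then bsY ^ 4 else bsX * bsY ^ 4 * bsX⁻¹)


noncomputable section

namespace KNP

theorem bs_rel : bsX * bsY ^ 2 * bsX⁻¹ = bsY ^ 3 := by
  have h : (PresentedGroup.mk bsRels) (FreeGroup.of 0 * FreeGroup.of 1 ^ 2 * (FreeGroup.of 0)⁻¹ *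
      (FreeGroup.of 1 ^ 3)⁻¹) = 1 :=
    PresentedGroup.one_of_mem rfl
  simp only [map_mul, map_pow, map_inv] at h
  exact mul_inv_eq_one.mp h

/-- universal property of G -/
def bsHom {H : Type*} [Group H] (a b : H) (h : a * b ^ 2 * a⁻¹ = b ^ 3) : BSGroup →* H :=
  PresentedGroup.toGroup (f := ![a, b]) (by
    intro r hr
    rw [bsRels, Set.mem_singleton_iff] at hr
    subst hr
    simp [h])

theorem bsHom_x {H : Type*} [Group H] (a b : H) (h : a * b ^ 2 * a⁻¹ = b ^ 3) :
    bsHom a b h bsX = a := by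
  simp [bsHom, bsX]

theorem bsHom_y {H : Type*} [Group H] (a b : H) (h : a * b ^ 2 * a⁻¹ = b ^ 3) :
    bsHom a b h bsY = b := by
  simp [bsHom, bsY]

theorem bs_top : Subgroup.closure {bsX, bsY} = (⊤ : Subgroup BSGroup) := by
  rw [eq_top_iff, ← PresentedGroup.closure_range_of bsRels, Subgroup.closure_le]
  rintro _ ⟨i, rfl⟩
  fin_cases i
  · exact Subgroup.subset_closure (Or.inl rfl)
  · exact Subgroup.subset_closure (Or.inr rfl)

/-- affine action on ℚ -/
def affQ : BSGroup →* Equiv.Perm ℚ :=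
  bsHom (Equiv.mulLeft₀ (3/2 : ℚ) (by norm_num)) (Equiv.addRight (1 : ℚ)) (by
    rw [mul_inv_eq_iff_eq_mul]
    ext q
    simp [pow_succ, Equiv.Perm.mul_apply]
    ring)

theorem affQ_y (k : ℤ) (q : ℚ) : affQ (bsY ^ k) q = q + k := by
  rw [map_zpow, affQ, bsHom_y]
  simp

theorem bsY_zpow {k : ℤ} (h : bsY ^ k = 1) : k = 0 := by
  have := affQ_y k 0
  rw [h] at this
  simpa using this.symm

/-- exponent -/
def expo : FreeGroup (Fin 2) →* Multiplicative ℤ :=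
  FreeGroup.lift ![Multiplicative.ofAdd 2, Multiplicative.ofAdd 3]

theorem eval_eq : evalInG = (zpowersHom BSGroup (bsY ^ 2)).comp expo := by
  ext i
  fin_cases i
  · simp [evalInG, expo, zpowersHom_apply]
    group
  · have h : bsX * bsY ^ 4 * bsX⁻¹ = bsY ^ 6 := by
      calc bsX * bsY ^ 4 * bsX⁻¹ = (bsX * bsY ^ 2 * bsX⁻¹) ^ 2 := by rw [sq (_ * _)]; group
        _ = _ := by rw [bs_rel]; group
    simp [evalInG, expo, zpowersHom_apply, h]
    group

theorem subst_eq : (FreeGroup.lift ![bsX, bsY ^ 2]).comp substitution =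
    (zpowersHom BSGroup bsY).comp expo := by
  ext i
  fin_cases i
  · simp [substitution, expo, zpowersHom_apply]
  · simp [substitution, expo, zpowersHom_apply, bs_rel]

theorem subst_one {w : FreeGroup (Fin 2)} (hw : evalInG w = 1) :
    FreeGroup.lift ![bsX, bsY ^ 2] (substitution w) = 1 := by
  have h1 := DFunLike.congr_fun subst_eq w
  simp only [MonoidHom.comp_apply] at h1
  rw [h1]
  rw [eval_eq] at hw
  simp only [MonoidHom.comp_apply, zpowersHom_apply] at hw ⊢
  rw [← zpow_natCast, ← zpow_mul] at hw
  have := bsY_zpow hw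
  have h0 : (Multiplicative.toAdd (expo w)) = 0 := by simpa using this
  rw [h0, zpow_zero]

/-- the endomorphism -/
def endo : BSGroup →* BSGroup := bsHom bsX (bsY ^ 2) (by
  calc bsX * (bsY ^ 2) ^ 2 * bsX⁻¹ = (bsX * bsY ^ 2 * bsX⁻¹) ^ 2 := by rw [sq (_ * _)]; group
    _ = _ := by rw [bs_rel]; group)

abbrev M := ℤ → ℂ

def mu (n : ℤ) : ℂ := Complex.exp (Real.pi * Complex.I / 3 * (2/3 : ℂ) ^ n)

theorem mu_ne (n : ℤ) : mu n ≠ 0 := Complex.exp_ne_zero _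

theorem mu_rel (n : ℤ) : mu (n - 1) ^ 2 = mu n ^ 3 := by
  unfold mu
  rw [← Complex.exp_nat_mul, ← Complex.exp_nat_mul, zpow_sub_one₀ (by norm_num)]
  congr 1
  push_cast
  ring

theorem mu_zero : mu 0 ^ 3 = -1 := by
  unfold mu
  rw [← Complex.exp_nat_mul, ← Complex.exp_pi_mul_I]
  congr 1
  push_cast
  simp
  ring

theorem mu_neg_one : mu (-1) ^ 2 = -1 := by
  have := mu_rel 0
  rw [mu_zero] at this
  simpa using this

theorem mu_zero_sq : mu 0 ^ 2 ≠ 1 := by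
  intro h
  have h3 := mu_zero
  have h1 : mu 0 = -1 := by
    have : mu 0 ^ 3 = mu 0 := by rw [pow_succ, h, one_mul]
    rw [← this, h3]
  unfold mu at h1
  rw [zpow_zero, mul_one, ← Complex.exp_pi_mul_I, Complex.exp_eq_exp_iff_exists_int] at h1
  obtain ⟨k, hk⟩ := h1
  have hp : (Real.pi : ℂ) * Complex.I ≠ 0 := by
    simp [Complex.I_ne_zero, Real.pi_ne_zero]
  have h2 : (Real.pi : ℂ) * Complex.I * (2 + 6 * k) = 0 := by linear_combination -3 * hk
  have h4 : (2 + 6 * k : ℂ) = 0 := (mul_eq_zero.mp h2).resolve_left hp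
  have h5 : (2 + 6 * k : ℤ) = 0 := by exact_mod_cast h4
  omega

/-- multiplication by a nowhere zero function -/
def mulP : Equiv.Perm M where
  toFun f n := mu n * f n
  invFun f n := (mu n)⁻¹ * f n
  left_inv f := by ext n; simp [mu_ne]
  right_inv f := by ext n; simp [mu_ne]

def shiftP (u : M) : Equiv.Perm M where
  toFun f n := f (n - 1) + u n
  invFun f n := f (n + 1) - u (n + 1)
  left_inv f := by ext n; simp
  right_inv f := by ext n; simp

/-- linear representation -/
def rho : BSGroup →* Equiv.Perm M := bsHom (shiftP 0) mulP (by
  rw [mul_inv_eq_iff_eq_mul]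
  ext f n
  simp only [pow_succ, pow_zero, one_mul, Equiv.Perm.mul_apply, shiftP, mulP, Equiv.coe_fn_mk,
    Pi.zero_apply]
  linear_combination (f (n-1)) * mu_rel n)

def dl : M := Pi.single 0 1

def Phi : BSGroup →* Equiv.Perm M := bsHom (shiftP dl) (mulP ^ 2) (by
  rw [mul_inv_eq_iff_eq_mul]
  ext f n
  simp only [pow_succ, pow_zero, one_mul, Equiv.Perm.mul_apply, shiftP, mulP, Equiv.coe_fn_mk]
  have h : (mu n ^ 6 - 1) * dl n = 0 := by
    by_cases hn : n = 0
    · subst hn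
      have : mu 0 ^ 6 = 1 := by linear_combination (mu 0 ^ 3 - 1) * mu_zero
      rw [this]; simp
    · simp [dl, hn]
  linear_combination (f (n-1)) * (mu (n-1) ^ 2 + mu n ^ 3) * mu_rel n - h)

theorem Phi_sub (g : BSGroup) : ∀ p q : M, Phi g p - Phi g q = rho (endo g) (p - q) := by
  have hg : g ∈ Subgroup.closure {bsX, bsY} := bs_top ▸ Subgroup.mem_top g
  induction hg using Subgroup.closure_induction with
  | mem g hg =>
    intro p q
    rcases hg with rfl | rfl
    · rw [Phi, endo, rho, bsHom_x, bsHom_x, bsHom_x]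
      ext n; simp [shiftP]
    · rw [Phi, endo, rho, bsHom_y, bsHom_y, map_pow, bsHom_y]
      ext n; simp [mulP, pow_succ]; ring
  | one => intro p q; simp
  | mul a b _ _ ha hb =>
    intro p q
    rw [map_mul, map_mul, map_mul, Equiv.Perm.mul_apply, Equiv.Perm.mul_apply,
      Equiv.Perm.mul_apply, ha, hb]
  | inv a _ ha =>
    intro p q
    have := ha ((Phi a)⁻¹ p) ((Phi a)⁻¹ q)
    rw [map_inv, map_inv, map_inv, Equiv.Perm.eq_inv_iff_eq, ← this]
    simp

theorem Phi_comm : Phi (bsY * (bsX * bsY * bsX⁻¹) * bsY⁻¹ * (bsX * bsY * bsX⁻¹)⁻¹) 0 ≠ 0 := by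
  intro h
  have h2 : Phi (bsY * (bsX * bsY * bsX⁻¹)) 0 = Phi ((bsX * bsY * bsX⁻¹) * bsY) 0 := by
    have e : Phi ((bsX * bsY * bsX⁻¹) * bsY) 0 - 0 = Phi ((bsX * bsY * bsX⁻¹) * bsY) 0 := sub_zero _
    have e1 := Phi_sub (bsY * (bsX * bsY * bsX⁻¹) * bsY⁻¹ * (bsX * bsY * bsX⁻¹)⁻¹)
      (Phi ((bsX * bsY * bsX⁻¹) * bsY) 0) 0
    have e2 : endo (bsY * (bsX * bsY * bsX⁻¹) * bsY⁻¹ * (bsX * bsY * bsX⁻¹)⁻¹) = 1 := by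
      simp only [map_mul, map_inv]
      rw [endo, bsHom_x, bsHom_y, bs_rel]
      group
    rw [e2, h, ← Equiv.Perm.mul_apply, ← map_mul] at e1
    simp only [map_one, Equiv.Perm.one_apply, sub_zero] at e1
    rw [← e1]
    congr 2
    group
  have h3 := congrFun h2 0
  simp only [map_mul, map_inv] at h3
  rw [Phi, bsHom_x, bsHom_y] at h3
  simp [pow_succ, Equiv.Perm.mul_apply, Equiv.Perm.inv_def, shiftP, mulP, dl] at h3
  have h4 := mu_neg_one
  have h5 := mu_zero_sq
  apply h5
  linear_combination (1/2) * h3 + (1/2) * (mu 0 ^ 2 - 1) * h4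

end KNP

end

open KNP in
/-- Let `W ⊆ F(a,b)` be any set of relations among `z = y⁴` and `x z x⁻¹`
holding in `G = ⟨x, y | x y² x⁻¹ = y³⟩`.  Then the assignment `x ↦ x`,
`z ↦ y⁴` induces a (unique) epimorphism
`Ḡ = ⟨x, z | w(z, x z x⁻¹) = 1 (w ∈ W)⟩ → G`, and its kernel `L` is not
perfect: the abelianization `L/[L,L]` is nonzero. -/
theorem kernel_not_perfect (W : Set (FreeGroup (Fin 2)))
    (hW : ∀ w ∈ W, evalInG w = 1) :
    (∃ φ : PresentedGroup (substitution '' W) →* BSGroup,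
        φ (PresentedGroup.of 0) = bsX ∧ φ (PresentedGroup.of 1) = bsY ^ 4) ∧
    ∀ φ : PresentedGroup (substitution '' W) →* BSGroup,
      φ (PresentedGroup.of 0) = bsX → φ (PresentedGroup.of 1) = bsY ^ 4 →
      Function.Surjective φ ∧ Nontrivial (Abelianization ↥φ.ker) := by
  constructor
  · suffices h : ∀ r ∈ substitution '' W, FreeGroup.lift ![bsX, bsY ^ 4] r = 1 from
      ⟨PresentedGroup.toGroup h, by simp, by simp⟩
    rintro _ ⟨w, hw, rfl⟩
    have : (FreeGroup.lift ![bsX, bsY ^ 4]).comp substitution = evalInG := by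
      ext i
      fin_cases i <;> simp [substitution, evalInG]
    rw [← MonoidHom.comp_apply, this]
    exact hW w hw
  intro φ hx hz
  have key : bsX * bsY ^ 4 * bsX⁻¹ * (bsY ^ 4)⁻¹ = bsY ^ 2 := by
    calc bsX * bsY ^ 4 * bsX⁻¹ * (bsY ^ 4)⁻¹ = (bsX * bsY ^ 2 * bsX⁻¹) ^ 2 * (bsY ^ 4)⁻¹ := by
          rw [sq (_ * _)]; group
        _ = _ := by rw [bs_rel]; group
  have key2 : bsX * bsY ^ 2 * bsX⁻¹ * (bsY ^ 2)⁻¹ = bsY := by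
    rw [bs_rel]; group
  constructor
  · rw [← MonoidHom.range_eq_top, eq_top_iff, ← bs_top, Subgroup.closure_le]
    have mx : bsX ∈ φ.range := ⟨_, hx⟩
    have mz : bsY ^ 4 ∈ φ.range := ⟨_, hz⟩
    have m2 : bsY ^ 2 ∈ φ.range := by
      rw [← key]
      exact mul_mem (mul_mem (mul_mem mx mz) (inv_mem mx)) (inv_mem mz)
    rintro _ (rfl | rfl)
    · exact mx
    · rw [← key2]
      exact mul_mem (mul_mem (mul_mem mx m2) (inv_mem mx)) (inv_mem m2)
  · let ψ : PresentedGroup (substitution '' W) →* BSGroup :=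
      PresentedGroup.toGroup (f := ![bsX, bsY ^ 2]) (by
        rintro _ ⟨w, hw, rfl⟩
        exact subst_one (hW w hw))
    have ψx : ψ (PresentedGroup.of 0) = bsX := by simp [ψ]
    have ψz : ψ (PresentedGroup.of 1) = bsY ^ 2 := by simp [ψ]
    have hφ : φ = endo.comp ψ := by
      apply PresentedGroup.ext
      intro i
      fin_cases i
      · change φ (PresentedGroup.of 0) = endo (ψ (PresentedGroup.of 0))
        rw [ψx, hx, endo, bsHom_x]
      · change φ (PresentedGroup.of 1) = endo (ψ (PresentedGroup.of 1))
        rw [ψz, hz, endo, map_pow, bsHom_y]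
        group
    let θ : ↥φ.ker →* Multiplicative M :=
      { toFun := fun g => Multiplicative.ofAdd (Phi (ψ g) 0)
        map_one' := by simp
        map_mul' := by
          intro a b
          have h := Phi_sub (ψ a) (Phi (ψ b) 0) 0
          have h1 : endo (ψ a) = 1 := by
            have := a.2
            rw [MonoidHom.mem_ker] at this
            exact (DFunLike.congr_fun hφ a.1).symm.trans this
          rw [h1] at h
          simp only [map_one, Equiv.Perm.one_apply, sub_zero] at h
          rw [← ofAdd_add]
          congr 1
          simp only [Subgroup.coe_mul, map_mul, Equiv.Perm.mul_apply]
          rw [sub_eq_iff_eq_add.mp h, add_comm] }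
    let X : PresentedGroup (substitution '' W) := PresentedGroup.of 0
    let Z : PresentedGroup (substitution '' W) := PresentedGroup.of 1
    let Y := X * Z * X⁻¹ * Z⁻¹
    have hY : ψ Y = bsY := by
      simp only [Y, X, Z, map_mul, map_inv, ψx, ψz, key2]
    let c := Y * (X * Y * X⁻¹) * Y⁻¹ * (X * Y * X⁻¹)⁻¹
    have hc : ψ c = bsY * (bsX * bsY * bsX⁻¹) * bsY⁻¹ * (bsX * bsY * bsX⁻¹)⁻¹ := by
      simp only [c, map_mul, map_inv, hY]
      simp only [X, ψx]
    have hck : c ∈ φ.ker := by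
      rw [MonoidHom.mem_ker, hφ, MonoidHom.comp_apply, hc]
      simp only [map_mul, map_inv]
      rw [endo, bsHom_x, bsHom_y, bs_rel]
      group
    refine ⟨Abelianization.of ⟨c, hck⟩, 1, fun h => ?_⟩
    have h1 := congrArg (Abelianization.lift θ) h
    rw [Abelianization.lift_apply_of, map_one] at h1
    have h2 : Phi (ψ c) 0 = 0 := h1
    rw [hc] at h2
    exact Phi_comm h2
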